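/- Let n ≥ 1 and define ν_t(r) = e^{t n²/2} · (L̃^n G_t)(r), where G_t(r) = e^{−r²/(2t)}/√(2πt) and L̃ is the n-fold iterated operator (L̃g)(r) = −(1/(2π))·g′(r)/sin r. Then ν satisfies the radial spherical heat equation: for every t > 0 and every r ∈ ℝ with sin r ≠ 0, ∂ν_t/∂t (r) = (1/2)·( ν_t″(r) + 2n·(cos r/sin r)·ν_t′(r) ). -/

import Mathlib

/-- The operator `L̃` given by `(L̃ g)(r) = -(1/(2π)) g'(r)/sin r`. -/
noncomputable def Lsph (g : ℝ → ℂ) : ℝ → ℂ :=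
  fun r => -(1 / (2 * (Real.pi : ℂ))) * deriv g r / (Real.sin r : ℂ)

/-- The unwrapped heat kernel of `S^{2n+1}`, `ν_t(r) = e^{tn²/2} (L̃ⁿ G_t)(r)`, where
`G_t(r) = e^{-r²/(2t)}/√(2πt)` is the one-dimensional Euclidean heat kernel. -/
noncomputable def nuSph (n : ℕ) (t : ℝ) : ℝ → ℂ :=
  fun r => (Real.exp (t * (n : ℝ) ^ 2 / 2) : ℂ) *
    Lsph^[n] (fun s => ((Real.exp (-(s ^ 2) / (2 * t)) / Real.sqrt (2 * Real.pi * t) : ℝ) : ℂ)) r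

open scoped ContDiff Topology

/-- The domain. -/
def Udom : Set (ℝ × ℝ) := {p | 0 < p.1 ∧ Real.sin p.2 ≠ 0}

lemma Udom_open : IsOpen Udom := by
  apply IsOpen.inter
  · exact isOpen_lt continuous_const continuous_fst
  · exact isOpen_ne_fun (Real.continuous_sin.comp continuous_snd) continuous_const

def Sm (F : ℝ × ℝ → ℂ) : Prop := ∀ p ∈ Udom, ContDiffAt ℝ ∞ F p

noncomputable def D1 (F : ℝ × ℝ → ℂ) : ℝ × ℝ → ℂ := fun p => deriv (fun u => F (u, p.2)) p.1
noncomputable def D2 (F : ℝ × ℝ → ℂ) : ℝ × ℝ → ℂ := fun p => deriv (fun s => F (p.1, s)) p.2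

lemma Sm.d {F : ℝ × ℝ → ℂ} (h : Sm F) {p} (hp : p ∈ Udom) : DifferentiableAt ℝ F p :=
  (h p hp).differentiableAt (by simp)

lemma hd1 {F : ℝ × ℝ → ℂ} {p : ℝ × ℝ} (h : DifferentiableAt ℝ F p) :
    HasDerivAt (fun u => F (u, p.2)) (fderiv ℝ F p (1, 0)) p.1 := by
  have h1 : HasDerivAt (fun u : ℝ => (u, p.2)) ((1 : ℝ), (0 : ℝ)) p.1 :=
    (hasDerivAt_id p.1).prodMk (hasDerivAt_const _ _)
  exact HasFDerivAt.comp_hasDerivAt (f := fun u : ℝ => (u, p.2)) p.1 h.hasFDerivAt h1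

lemma hd2 {F : ℝ × ℝ → ℂ} {p : ℝ × ℝ} (h : DifferentiableAt ℝ F p) :
    HasDerivAt (fun u => F (p.1, u)) (fderiv ℝ F p (0, 1)) p.2 := by
  have h1 : HasDerivAt (fun u : ℝ => (p.1, u)) ((0 : ℝ), (1 : ℝ)) p.2 :=
    (hasDerivAt_const _ _).prodMk (hasDerivAt_id p.2)
  exact HasFDerivAt.comp_hasDerivAt (f := fun u : ℝ => (p.1, u)) p.2 h.hasFDerivAt h1

lemma D1_ev {F : ℝ × ℝ → ℂ} (h : Sm F) {p} (hp : p ∈ Udom) :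
    D1 F =ᶠ[𝓝 p] fun q => fderiv ℝ F q (1, 0) := by
  filter_upwards [Udom_open.mem_nhds hp] with q hq
  exact (hd1 (h.d hq)).deriv

lemma D2_ev {F : ℝ × ℝ → ℂ} (h : Sm F) {p} (hp : p ∈ Udom) :
    D2 F =ᶠ[𝓝 p] fun q => fderiv ℝ F q (0, 1) := by
  filter_upwards [Udom_open.mem_nhds hp] with q hq
  exact (hd2 (h.d hq)).deriv

lemma Sm.fd {F : ℝ × ℝ → ℂ} (h : Sm F) {p} (hp : p ∈ Udom) :
    ContDiffAt ℝ ∞ (fderiv ℝ F) p := (h p hp).fderiv_right (m := ∞) (by simp)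

lemma Sm.D1 {F : ℝ × ℝ → ℂ} (h : Sm F) : Sm (D1 F) := fun p hp =>
  ((h.fd hp).clm_apply contDiffAt_const).congr_of_eventuallyEq (D1_ev h hp)

lemma Sm.D2 {F : ℝ × ℝ → ℂ} (h : Sm F) : Sm (D2 F) := fun p hp =>
  ((h.fd hp).clm_apply contDiffAt_const).congr_of_eventuallyEq (D2_ev h hp)

lemma mixed {F : ℝ × ℝ → ℂ} (h : Sm F) {p} (hp : p ∈ Udom) : D1 (D2 F) p = D2 (D1 F) p := by
  have hfd : DifferentiableAt ℝ (fderiv ℝ F) p := (h.fd hp).differentiableAt (by simp)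
  have a : D1 (D2 F) p = fderiv ℝ (D2 F) p (1, 0) := (hd1 (h.D2.d hp)).deriv
  have b : D2 (D1 F) p = fderiv ℝ (D1 F) p (0, 1) := (hd2 (h.D1.d hp)).deriv
  have key : ∀ v w : ℝ × ℝ, fderiv ℝ (fun q => fderiv ℝ F q v) p w
      = fderiv ℝ (fderiv ℝ F) p w v := by
    intro v w
    rw [(hfd.hasFDerivAt.clm_apply (hasFDerivAt_const v p)).fderiv]
    simp
  rw [a, b, (D2_ev h hp).fderiv_eq, (D1_ev h hp).fderiv_eq, key, key]
  have hs : IsSymmSndFDerivAt ℝ F p := ((h p hp).of_le (m := 2) (WithTop.coe_le_coe.2 le_top)).isSymmSndFDerivAt (by simp)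
  exact hs _ _

lemma sl1 {p : ℝ × ℝ} (hp : p ∈ Udom) {F G : ℝ × ℝ → ℂ} (h : ∀ q ∈ Udom, F q = G q) :
    D1 F p = D1 G p := by
  apply Filter.EventuallyEq.deriv_eq
  have : Filter.Tendsto (fun u : ℝ => (u, p.2)) (𝓝 p.1) (𝓝 p) :=
    (by fun_prop : Continuous (fun u : ℝ => (u, p.2))).tendsto p.1
  filter_upwards [this (Udom_open.mem_nhds hp)] with u hu
  exact h _ hu

lemma sl2 {p : ℝ × ℝ} (hp : p ∈ Udom) {F G : ℝ × ℝ → ℂ} (h : ∀ q ∈ Udom, F q = G q) :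
    D2 F p = D2 G p := by
  apply Filter.EventuallyEq.deriv_eq
  have : Filter.Tendsto (fun u : ℝ => (p.1, u)) (𝓝 p.2) (𝓝 p) :=
    (by fun_prop : Continuous (fun u : ℝ => (p.1, u))).tendsto p.2
  filter_upwards [this (Udom_open.mem_nhds hp)] with u hu
  exact h _ hu

noncomputable def Fn (n : ℕ) (p : ℝ × ℝ) : ℂ :=
  Lsph^[n] (fun s => ((Real.exp (-(s ^ 2) / (2 * p.1)) / Real.sqrt (2 * Real.pi * p.1) : ℝ) : ℂ)) p.2

lemma Fn_succ (n : ℕ) (p : ℝ × ℝ) :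
    Fn (n+1) p = -(1 / (2 * (Real.pi : ℂ))) * D2 (Fn n) p / (Real.sin p.2 : ℂ) := by
  simp only [Fn, Function.iterate_succ_apply', D2]
  rfl

lemma hsinC (x : ℝ) : HasDerivAt (fun s : ℝ => (Real.sin s : ℂ)) (Real.cos x : ℂ) x :=
  (Real.hasDerivAt_sin x).ofReal_comp
lemma hcosC (x : ℝ) : HasDerivAt (fun s : ℝ => (Real.cos s : ℂ)) (-Real.sin x : ℂ) x := by
  simpa using (Real.hasDerivAt_cos x).ofReal_comp

lemma Fn_sm (n : ℕ) : Sm (Fn n) := by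
  induction n with
  | zero =>
    intro p hp
    have h0 : (0:ℝ) < 2 * Real.pi * p.1 := by have := hp.1; positivity
    have h1 : (2 * p.1 : ℝ) ≠ 0 := by have := hp.1; positivity
    have : ContDiffAt ℝ ∞ (fun p : ℝ × ℝ =>
        Real.exp (-(p.2 ^ 2) / (2 * p.1)) / Real.sqrt (2 * Real.pi * p.1)) p := by
      apply ContDiffAt.div
      · apply ContDiffAt.exp
        refine ContDiffAt.div (x := p) (f := fun x : ℝ × ℝ => -x.2 ^ 2) (g := fun x : ℝ × ℝ => 2 * x.1) ?_ ?_ h1 <;> fun_prop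
      · refine ContDiffAt.sqrt (x := p) (f := fun x : ℝ × ℝ => 2 * Real.pi * x.1) ?_ h0.ne'
        fun_prop
      · exact (Real.sqrt_pos.2 h0).ne'
    exact Complex.ofRealCLM.contDiff.contDiffAt.comp p this
  | succ n ih =>
    intro p hp
    rw [show Fn (n+1) = _ from funext (Fn_succ n)]
    have : ContDiffAt ℝ ∞ (fun p : ℝ × ℝ => (Real.sin p.2 : ℂ)) p :=
      Complex.ofRealCLM.contDiff.contDiffAt.comp p
        (by fun_prop : ContDiffAt ℝ ∞ (fun p : ℝ × ℝ => Real.sin p.2) p)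
    have hs : (Real.sin p.2 : ℂ) ≠ 0 := by exact_mod_cast hp.2
    simp only [div_eq_mul_inv _ (Complex.ofReal _)]
    exact ContDiffAt.mul (contDiffAt_const.mul (ih.D2 p hp)) (this.inv hs)

lemma d2 {F : ℝ × ℝ → ℂ} (h : Sm F) {p} (hp : p ∈ Udom) :
    HasDerivAt (fun s => F (p.1, s)) (D2 F p) p.2 := (hd2 (h.d hp)).differentiableAt.hasDerivAt
lemma d1 {F : ℝ × ℝ → ℂ} (h : Sm F) {p} (hp : p ∈ Udom) :
    HasDerivAt (fun s => F (s, p.2)) (D1 F p) p.1 := (hd1 (h.d hp)).differentiableAt.hasDerivAt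

lemma base (p) (hp : p ∈ Udom) : D1 (Fn 0) p = 1 / 2 * D2 (D2 (Fn 0)) p := by
  obtain ⟨t, r⟩ := p
  have ht : 0 < t := hp.1
  have hg : ∀ s x : ℝ, 0 < s → HasDerivAt (fun y : ℝ => Real.exp (-(y ^ 2) / (2 * s)) / Real.sqrt (2 * Real.pi * s))
      (-(x / s) * (Real.exp (-(x ^ 2) / (2 * s)) / Real.sqrt (2 * Real.pi * s))) x := by
    intro s x hs
    have := (((((hasDerivAt_id x).pow 2).neg).div_const (2 * s)).exp).div_const
      (Real.sqrt (2 * Real.pi * s))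
    refine this.congr_deriv ?_
    simp
    field_simp
  have e2 : ∀ q ∈ Udom, D2 (Fn 0) q = (fun q : ℝ × ℝ => ((-(q.2 / q.1) *
      (Real.exp (-(q.2 ^ 2) / (2 * q.1)) / Real.sqrt (2 * Real.pi * q.1)) : ℝ) : ℂ)) q := by
    intro q hq
    exact (hg q.1 q.2 hq.1).ofReal_comp.deriv
  rw [sl2 hp e2]
  have e3 := (((hasDerivAt_id r).div_const t).neg.mul (hg t r ht)).ofReal_comp.deriv
  have e1 : HasDerivAt (fun s : ℝ => Real.exp (-(r ^ 2) / (2 * s)) / Real.sqrt (2 * Real.pi * s))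
     ((r^2/(2*t^2) - 1/(2*t)) * (Real.exp (-(r ^ 2) / (2 * t)) / Real.sqrt (2 * Real.pi * t))) t := by
    have h0 : (0:ℝ) < 2 * Real.pi * t := by positivity
    have hsq : 0 < Real.sqrt (2 * Real.pi * t) := Real.sqrt_pos.2 h0
    have := (((hasDerivAt_const t (-(r^2))).div ((hasDerivAt_id t).const_mul 2) (by simp; exact ht.ne')).exp).div
      ((((hasDerivAt_id t).const_mul (2 * Real.pi))).sqrt h0.ne') hsq.ne'
    refine this.congr_deriv ?_
    have hs2 : Real.sqrt (2 * Real.pi * t) ^ 2 = 2 * Real.pi * t := Real.sq_sqrt h0.le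
    simp only [id, mul_one, Pi.div_apply, Function.comp]
    generalize Real.sqrt (2 * Real.pi * t) = w at *
    have hpi : Real.pi = w^2 / (2 * t) := by rw [hs2]; field_simp
    rw [hpi]
    field_simp
    ring
  have e1' : D1 (Fn 0) (t, r) = _ := e1.ofReal_comp.deriv
  refine e1'.trans ?_
  refine Eq.trans ?_ (congrArg (fun z : ℂ => 1/2 * z) e3.symm)
  simp only [id, Pi.neg_apply]
  push_cast
  have : (t : ℂ) ≠ 0 := by exact_mod_cast ht.ne'
  field_simp
  ring

lemma heat (n : ℕ) : ∀ p ∈ Udom, D1 (Fn n) p = 1 / 2 * (D2 (D2 (Fn n)) p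
    + 2 * n * ((Real.cos p.2 : ℂ) / Real.sin p.2) * D2 (Fn n) p - n ^ 2 * Fn n p) := by
  induction n with
  | zero => intro p hp; rw [base p hp]; simp
  | succ n ih =>
    intro p hp
    have hs : (Real.sin p.2 : ℂ) ≠ 0 := by exact_mod_cast hp.2
    have hpi : (Real.pi : ℂ) ≠ 0 := by exact_mod_cast Real.pi_ne_zero
    have hcs : (Real.cos p.2 : ℂ) ^ 2 = 1 - (Real.sin p.2 : ℂ) ^ 2 := by
      have := Real.sin_sq_add_cos_sq p.2
      have h2 : (Real.sin p.2 : ℂ) ^ 2 + (Real.cos p.2 : ℂ) ^ 2 = 1 := by exact_mod_cast this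
      linear_combination h2
    have S := Fn_sm n
    have S' := Fn_sm (n+1)
    -- F' in terms of H
    have f1 : ∀ q ∈ Udom, D2 (Fn n) q
        = (fun q : ℝ × ℝ => -(2 * Real.pi) * (Real.sin q.2 * Fn (n+1) q)) q := by
      intro q hq
      have hs : (Real.sin q.2 : ℂ) ≠ 0 := by exact_mod_cast hq.2
      simp only [Fn_succ]
      field_simp
    have f2 : ∀ q ∈ Udom, D2 (D2 (Fn n)) q = (fun q : ℝ × ℝ => -(2 * Real.pi) *
        (Real.cos q.2 * Fn (n+1) q + Real.sin q.2 * D2 (Fn (n+1)) q)) q := by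
      intro q hq
      rw [sl2 hq f1]
      exact (((hsinC q.2).mul (d2 S' hq)).const_mul _).deriv
    have f3 : D2 (D2 (D2 (Fn n))) p = -(2 * Real.pi) *
        ((-Real.sin p.2 * Fn (n+1) p + Real.cos p.2 * D2 (Fn (n+1)) p) +
          (Real.cos p.2 * D2 (Fn (n+1)) p + Real.sin p.2 * D2 (D2 (Fn (n+1))) p)) := by
      rw [sl2 hp f2]
      exact ((((hcosC p.2).mul (d2 S' hp)).add ((hsinC p.2).mul (d2 S'.D2 hp))).const_mul _).deriv
    have g1 : D1 (Fn (n+1)) p = -(1 / (2 * (Real.pi : ℂ))) * D2 (D1 (Fn n)) p / Real.sin p.2 := by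
      rw [← mixed S hp, sl1 hp (fun q _ => Fn_succ n q)]
      exact (((d1 S.D2 hp).const_mul (-(1 / (2 * (Real.pi : ℂ))))).div_const (Real.sin p.2 : ℂ)).deriv
    have g2 : D2 (D1 (Fn n)) p = 1 / 2 * (D2 (D2 (D2 (Fn n))) p
        + (2 * n * ((-Real.sin p.2 * Real.sin p.2 - Real.cos p.2 * Real.cos p.2) / Real.sin p.2 ^ 2)
             * D2 (Fn n) p
           + 2 * n * ((Real.cos p.2 : ℂ) / Real.sin p.2) * D2 (D2 (Fn n)) p)
        - n ^ 2 * D2 (Fn n) p) := by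
      rw [sl2 hp ih]
      have k1 := (((hcosC p.2).div (hsinC p.2) hs).const_mul (2 * (n:ℂ))).mul (d2 S.D2 hp)
      have k2 := (d2 S hp).const_mul ((n : ℂ) ^ 2)
      have k3 := (((d2 S.D2.D2 hp).add k1).sub k2).const_mul (1 / 2 : ℂ)
      exact k3.deriv
    rw [g1, g2, f3, f2 p hp, f1 p hp]
    push_cast
    push_cast at hs hcs
    field_simp
    ring_nf

/-- `ν` satisfies the radial heat equation on `S^{2n+1}`. -/
theorem stmt_5 (n : ℕ) (hn : 1 ≤ n) (t : ℝ) (ht : 0 < t) (r : ℝ) (hr : Real.sin r ≠ 0) :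
    deriv (fun u : ℝ => nuSph n u r) t
      = (1 / 2) * (deriv (deriv (nuSph n t)) r
          + 2 * (n : ℂ) * ((Real.cos r : ℂ) / (Real.sin r : ℂ)) * deriv (nuSph n t) r) := by
  have hp : (t, r) ∈ Udom := ⟨ht, hr⟩
  have S := Fn_sm n
  have a : deriv (nuSph n t) = fun s => (Real.exp (t * (n : ℝ) ^ 2 / 2) : ℂ) * D2 (Fn n) (t, s) := by
    funext s
    exact deriv_const_mul_field _
  have b : deriv (deriv (nuSph n t)) r
      = (Real.exp (t * (n : ℝ) ^ 2 / 2) : ℂ) * D2 (D2 (Fn n)) (t, r) := by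
    rw [a]
    exact deriv_const_mul_field _
  have he : HasDerivAt (fun u : ℝ => (Real.exp (u * (n : ℝ) ^ 2 / 2) : ℂ))
      ((Real.exp (t * (n : ℝ) ^ 2 / 2) * (1 * (n : ℝ) ^ 2 / 2) : ℝ) : ℂ) t :=
    ((((hasDerivAt_id t).mul_const ((n:ℝ)^2)).div_const 2).exp).ofReal_comp
  have c : deriv (fun u : ℝ => nuSph n u r) t = _ := (he.mul (d1 S hp)).deriv
  rw [c, b, a, heat n _ hp]
  push_cast
  ring
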